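/- arXiv:1804.08373 — 2 statements merged into one kernel-verified Lean document; each statement's English description precedes it below -/
import Mathlib

section
/- A term t of the calculus λ_S is stuck (i.e., t is not a value and there is no t' with t →_v t') if and only if either t = E[S k.t'] for some pure evaluation context E, variable k and term t', or t = F[x v] for some evaluation context F, variable x and value v. -/
namespace LambdaS

/-- Terms of the calculus λ_S: variables, λ-abstractions, applications,
the shift operator `S k.t`, and the reset delimiter `⟨t⟩`. -/
inductive Tm : Type
  | var : ℕ → Tm
  | lam : ℕ → Tm → Tm
  | app : Tm → Tm → Tm
  | shift : ℕ → Tm → Tm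
  | reset : Tm → Tm
  deriving DecidableEq

/-- A variable fresh for a finite set of variables. -/
def fresh (s : Finset ℕ) : ℕ := if h : s.Nonempty then s.max' h + 1 else 0

namespace Tm

/-- Free variables. -/
def fv : Tm → Finset ℕ
  | var x => {x}
  | lam x t => fv t \ {x}
  | app t u => fv t ∪ fv u
  | shift k t => fv t \ {k}
  | reset t => fv t

def size : Tm → ℕ
  | var _ => 1
  | lam _ t => size t + 1
  | app t u => size t + size u + 1
  | shift _ t => size t + 1
  | reset t => size t + 1

/-- Renaming of free occurrences of a variable (used for α-renaming with a
fresh target variable). -/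
def rename : Tm → ℕ → ℕ → Tm
  | var w, y, z => if w = y then var z else var w
  | lam w t, y, z => if w = y then lam w t else lam w (rename t y z)
  | app t u, y, z => app (rename t y z) (rename u y z)
  | shift w t, y, z => if w = y then shift w t else shift w (rename t y z)
  | reset t, y, z => reset (rename t y z)

theorem size_rename (t : Tm) (y z : ℕ) : size (rename t y z) = size t := by
  induction t generalizing y z with
  | var w => simp only [rename]; split <;> rfl
  | lam w t ih => simp only [rename]; split <;> simp [size, ih]
  | app t u iht ihu => simp [rename, size, iht, ihu]
  | shift w t ih => simp only [rename]; split <;> simp [size, ih]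
  | reset t ih => simp [rename, size, ih]

/-- Capture-avoiding substitution `t{v/x}` of `v` for the free occurrences of
`x` in `t`; bound variables are α-renamed when needed. -/
def subst : Tm → ℕ → Tm → Tm
  | var w, x, v => if w = x then v else var w
  | lam y t, x, v =>
      if y = x then lam y t
      else if y ∈ fv v then
        lam (fresh (fv v ∪ fv t ∪ {x}))
          (subst (rename t y (fresh (fv v ∪ fv t ∪ {x}))) x v)
      else lam y (subst t x v)
  | app t u, x, v => app (subst t x v) (subst u x v)
  | shift y t, x, v =>
      if y = x then shift y t
      else if y ∈ fv v then
        shift (fresh (fv v ∪ fv t ∪ {x}))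
          (subst (rename t y (fresh (fv v ∪ fv t ∪ {x}))) x v)
      else shift y (subst t x v)
  | reset t, x, v => reset (subst t x v)
termination_by t _ _ => size t
decreasing_by all_goals simp [size_rename, size] <;> omega

end Tm

/-- Values: variables and λ-abstractions. -/
inductive IsValue : Tm → Prop
  | var (x : ℕ) : IsValue (Tm.var x)
  | lam (x : ℕ) (t : Tm) : IsValue (Tm.lam x t)

/-- A term is closed if it has no free variables. -/
def Closed (t : Tm) : Prop := t.fv = ∅

/-- Pure evaluation contexts E ::= □ | v E | E t. -/
inductive ECtx : Type
  | hole : ECtx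
  | appR : (v : Tm) → IsValue v → ECtx → ECtx
  | appL : ECtx → Tm → ECtx

def ECtx.plug : ECtx → Tm → Tm
  | .hole, t => t
  | .appR v _ E, t => Tm.app v (E.plug t)
  | .appL E u, t => Tm.app (E.plug t) u

def ECtx.fv : ECtx → Finset ℕ
  | .hole => ∅
  | .appR v _ E => v.fv ∪ E.fv
  | .appL E u => E.fv ∪ u.fv

/-- Composition of pure contexts: `(E.comp E').plug t = E.plug (E'.plug t)`. -/
def ECtx.comp : ECtx → ECtx → ECtx
  | .hole, E' => E'
  | .appR v hv E, E' => .appR v hv (E.comp E')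
  | .appL E u, E' => .appL (E.comp E') u

/-- Evaluation contexts F ::= □ | v F | F t | ⟨F⟩. -/
inductive FCtx : Type
  | hole : FCtx
  | appR : (v : Tm) → IsValue v → FCtx → FCtx
  | appL : FCtx → Tm → FCtx
  | reset : FCtx → FCtx

def FCtx.plug : FCtx → Tm → Tm
  | .hole, t => t
  | .appR v _ F, t => Tm.app v (F.plug t)
  | .appL F u, t => Tm.app (F.plug t) u
  | .reset F, t => Tm.reset (F.plug t)

def FCtx.fv : FCtx → Finset ℕ
  | .hole => ∅
  | .appR v _ F => v.fv ∪ F.fv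
  | .appL F u => F.fv ∪ u.fv
  | .reset F => F.fv

/-- The function `λx.⟨E[x]⟩` representing the captured delimited context `E`,
where `x` is chosen fresh (in particular `x ∉ fv E`). -/
def contFun (E : ECtx) : Tm :=
  Tm.lam (fresh E.fv) (Tm.reset (E.plug (Tm.var (fresh E.fv))))

/-- Call-by-value reduction →_v of λ_S. -/
inductive Red : Tm → Tm → Prop
  | beta (F : FCtx) (x : ℕ) (t v : Tm) :
      IsValue v →
      Red (F.plug (Tm.app (Tm.lam x t) v)) (F.plug (t.subst x v))
  | capture (F : FCtx) (E : ECtx) (k : ℕ) (t : Tm) :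
      Red (F.plug (Tm.reset (E.plug (Tm.shift k t))))
          (F.plug (Tm.reset (t.subst k (contFun E))))
  | resetVal (F : FCtx) (v : Tm) :
      IsValue v →
      Red (F.plug (Tm.reset v)) (F.plug v)

/-- A stuck term: not a value and unable to reduce. -/
def Stuck (t : Tm) : Prop := ¬ IsValue t ∧ ∀ t', ¬ Red t t'

/-- Normal forms: values and stuck terms. -/
def NormalForm (t : Tm) : Prop := IsValue t ∨ Stuck t

/-- A control-stuck term has the form E[S k.t]. -/
def ControlStuck (t : Tm) : Prop :=
  ∃ (E : ECtx) (k : ℕ) (s : Tm), t = E.plug (Tm.shift k s)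

/-- Evaluation: `t ⇓ t'` iff `t →_v* t'` and `t'` is a normal form. -/
def Evals (t t' : Tm) : Prop := Relation.ReflTransGen Red t t' ∧ NormalForm t'

/-- `t` evaluates to some value. -/
def EvalsToValue (t : Tm) : Prop := ∃ v, Relation.ReflTransGen Red t v ∧ IsValue v

/-- `t` evaluates to some control-stuck term. -/
def EvalsToStuck (t : Tm) : Prop :=
  ∃ s, Relation.ReflTransGen Red t s ∧ ControlStuck s

/-- General contexts C ::= □ | λx.C | t C | C t | S k.C | ⟨C⟩. -/
inductive Ctx : Type
  | hole : Ctx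
  | lam : ℕ → Ctx → Ctx
  | appL : Ctx → Tm → Ctx
  | appR : Tm → Ctx → Ctx
  | shift : ℕ → Ctx → Ctx
  | reset : Ctx → Ctx

def Ctx.plug : Ctx → Tm → Tm
  | .hole, t => t
  | .lam x C, t => Tm.lam x (C.plug t)
  | .appL C u, t => Tm.app (C.plug t) u
  | .appR u C, t => Tm.app u (C.plug t)
  | .shift k C, t => Tm.shift k (C.plug t)
  | .reset C, t => Tm.reset (C.plug t)

def Ctx.fv : Ctx → Finset ℕ
  | .hole => ∅
  | .lam x C => C.fv \ {x}
  | .appL C u => C.fv ∪ u.fv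
  | .appR u C => u.fv ∪ C.fv
  | .shift k C => C.fv \ {k}
  | .reset C => C.fv

/-- Contextual equivalence ≈ for the relaxed semantics (on closed terms):
tests evaluation to values and evaluation to control-stuck terms in every
closed context. -/
def CtxEquiv (t0 t1 : Tm) : Prop :=
  ∀ C : Ctx, C.fv = ∅ →
    (EvalsToValue (C.plug t0) ↔ EvalsToValue (C.plug t1)) ∧
    (EvalsToStuck (C.plug t0) ↔ EvalsToStuck (C.plug t1))

/-- Contextual equivalence ≈_p for the original semantics: tests evaluation to
values of ⟨C[·]⟩ in every closed context C. -/
def CtxEquivP (t0 t1 : Tm) : Prop :=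
  ∀ C : Ctx, C.fv = ∅ →
    (EvalsToValue (Tm.reset (C.plug t0)) ↔ EvalsToValue (Tm.reset (C.plug t1)))

/-- Contextual equivalence ≈_E testing only with closed evaluation contexts. -/
def ECtxEquiv (t0 t1 : Tm) : Prop :=
  ∀ F : FCtx, F.fv = ∅ →
    (EvalsToValue (F.plug t0) ↔ EvalsToValue (F.plug t1)) ∧
    (EvalsToStuck (F.plug t0) ↔ EvalsToStuck (F.plug t1))

/-- Applicative simulation. -/
def IsAppSim (R : Tm → Tm → Prop) : Prop :=
  ∀ t0 t1, R t0 t1 →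
    (∀ t0', Red t0 t0' →
      ∃ t1', Relation.ReflTransGen Red t1 t1' ∧ R t0' t1') ∧
    (∀ x t0', t0 = Tm.lam x t0' →
      ∃ t1', Relation.ReflTransGen Red t1 (Tm.lam x t1') ∧
        ∀ v, IsValue v → Closed v → R (t0'.subst x v) (t1'.subst x v)) ∧
    (∀ (E0 : ECtx) (k : ℕ) (t0' : Tm), t0 = E0.plug (Tm.shift k t0') →
      ∃ (E1 : ECtx) (t1' : Tm),
        Relation.ReflTransGen Red t1 (E1.plug (Tm.shift k t1')) ∧
        ∀ E : ECtx, E.fv = ∅ →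
          R (Tm.reset (t0'.subst k (contFun (E.comp E0))))
            (Tm.reset (t1'.subst k (contFun (E.comp E1)))))

/-- Applicative bisimulation. -/
def IsAppBisim (R : Tm → Tm → Prop) : Prop :=
  IsAppSim R ∧ IsAppSim (fun a b => R b a)

/-- Applicative bisimilarity ≈_app: the largest applicative bisimulation. -/
def AppBisim (t0 t1 : Tm) : Prop := ∃ R, IsAppBisim R ∧ R t0 t1

/-- Simultaneous substitution (used only with closing substitutions mapping
variables to closed values, so no capture can occur). -/
def Tm.msubst : Tm → (ℕ → Tm) → Tm
  | .var x, σ => σ x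
  | .lam x t, σ => Tm.lam x (t.msubst (Function.update σ x (Tm.var x)))
  | .app t u, σ => Tm.app (t.msubst σ) (u.msubst σ)
  | .shift k t, σ => Tm.shift k (t.msubst (Function.update σ k (Tm.var k)))
  | .reset t, σ => Tm.reset (t.msubst σ)

/-- Open extension of a relation on closed terms: relate `t0σ` and `t1σ` for
every substitution σ mapping variables to closed values. -/
def OpenExt (R : Tm → Tm → Prop) (t0 t1 : Tm) : Prop :=
  ∀ σ : ℕ → Tm, (∀ x, IsValue (σ x) ∧ Closed (σ x)) →
    R (t0.msubst σ) (t1.msubst σ)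

/-- ω := λx.x x. -/
def omegaTm : Tm := Tm.lam 0 (Tm.app (Tm.var 0) (Tm.var 0))

/-- Ω := ω ω, a diverging term. -/
def OmegaTm : Tm := Tm.app omegaTm omegaTm

/- Every non-value splits in exactly one way into an evaluation context around a potential redex:
`v w`, `⟨v⟩` or `S k.t`. Such a decomposition reduces unless the potential redex is `x v`, or is a
shift whose context crosses no reset, that is, a pure context; uniqueness then excludes any
reduction that looks for its redex elsewhere in these two kinds of term. -/

/-- Potential redexes: the non-values inside which evaluation does not search further. A shift
counts as one by itself, whether or not a reset delimits it. -/
inductive PotentialRedex : Tm → Prop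
  | app {v w : Tm} (hv : IsValue v) (hw : IsValue w) : PotentialRedex (.app v w)
  | shift (k : ℕ) (t : Tm) : PotentialRedex (.shift k t)
  | reset {v : Tm} (hv : IsValue v) : PotentialRedex (.reset v)

theorem PotentialRedex.not_isValue {r : Tm} (hr : PotentialRedex r) : ¬ IsValue r := by
  cases hr <;> rintro ⟨⟩

namespace FCtx

/-- Composition of evaluation contexts: `F.comp G` is `F[G]`. -/
def comp : FCtx → FCtx → FCtx
  | .hole, G => G
  | .appR v hv F, G => .appR v hv (F.comp G)
  | .appL F u, G => .appL (F.comp G) u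
  | .reset F, G => .reset (F.comp G)

theorem plug_comp (F G : FCtx) (t : Tm) : (F.comp G).plug t = F.plug (G.plug t) := by
  induction F <;> simp only [comp, plug, *]

theorem not_isValue_plug (F : FCtx) {t : Tm} (ht : ¬ IsValue t) : ¬ IsValue (F.plug t) := by
  cases F with
  | hole => exact ht
  | _ => rintro ⟨⟩

end FCtx

theorem PotentialRedex.eq_hole_of_plug {F : FCtx} {t : Tm} (h : PotentialRedex (F.plug t))
    (ht : ¬ IsValue t) : F = .hole := by
  cases F with
  | hole => rfl
  | appR v hv F => cases h with | app _ hw => exact absurd hw (F.not_isValue_plug ht)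
  | appL F u => cases h with | app hv _ => exact absurd hv (F.not_isValue_plug ht)
  | reset F => cases h with | reset hv => exact absurd hv (F.not_isValue_plug ht)

theorem exists_eq_plug_potentialRedex {t : Tm} (ht : ¬ IsValue t) :
    ∃ (F : FCtx) (r : Tm), PotentialRedex r ∧ t = F.plug r := by
  induction t with
  | var x => exact absurd (.var x) ht
  | lam x t => exact absurd (.lam x t) ht
  | shift k t => exact ⟨.hole, _, .shift k t, rfl⟩
  | reset t ih =>
    by_cases hv : IsValue t
    · exact ⟨.hole, _, .reset hv, rfl⟩
    · obtain ⟨F, r, hr, rfl⟩ := ih hv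
      exact ⟨.reset F, r, hr, rfl⟩
  | app t u iht ihu =>
    by_cases hv : IsValue t
    · by_cases hw : IsValue u
      · exact ⟨.hole, _, .app hv hw, rfl⟩
      · obtain ⟨F, r, hr, rfl⟩ := ihu hw
        exact ⟨.appR t hv F, r, hr, rfl⟩
    · obtain ⟨F, r, hr, rfl⟩ := iht hv
      exact ⟨.appL F u, r, hr, rfl⟩

theorem FCtx.plug_potentialRedex_inj {F G : FCtx} {r s : Tm} (hr : PotentialRedex r)
    (hs : PotentialRedex s) (h : F.plug r = G.plug s) : F = G ∧ r = s := by
  induction F generalizing G with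
  | hole =>
    obtain rfl : r = G.plug s := h
    obtain rfl := hr.eq_hole_of_plug hs.not_isValue
    exact ⟨rfl, rfl⟩
  | appR v hv F ih =>
    cases G with
    | hole => subst h; cases hs.eq_hole_of_plug (F := .appR v hv F) hr.not_isValue
    | appR w hw G =>
      obtain ⟨rfl, hFG⟩ := Tm.app.inj h
      exact (ih hFG).imp_left (congrArg (FCtx.appR v hv))
    | appL G u =>
      obtain ⟨rfl, -⟩ := Tm.app.inj h
      exact absurd hv (G.not_isValue_plug hs.not_isValue)
    | reset G => cases h
  | appL F u ih =>
    cases G with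
    | hole => subst h; cases hs.eq_hole_of_plug (F := .appL F u) hr.not_isValue
    | appR w hw G =>
      obtain ⟨rfl, -⟩ := Tm.app.inj h
      exact absurd hw (F.not_isValue_plug hr.not_isValue)
    | appL G u =>
      obtain ⟨hFG, rfl⟩ := Tm.app.inj h
      exact (ih hFG).imp_left (congrArg (FCtx.appL · u))
    | reset G => cases h
  | reset F ih =>
    cases G with
    | hole => subst h; cases hs.eq_hole_of_plug (F := .reset F) hr.not_isValue
    | reset G => exact (ih (Tm.reset.inj h)).imp_left (congrArg FCtx.reset)
    | _ => cases h

namespace ECtx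

/-- The inclusion of pure evaluation contexts into evaluation contexts. -/
def toFCtx : ECtx → FCtx
  | .hole => .hole
  | .appR v hv E => .appR v hv E.toFCtx
  | .appL E u => .appL E.toFCtx u

theorem plug_toFCtx (E : ECtx) (t : Tm) : E.toFCtx.plug t = E.plug t := by
  induction E <;> simp only [toFCtx, plug, FCtx.plug, *]

theorem toFCtx_ne_comp_reset (E : ECtx) (F G : FCtx) : E.toFCtx ≠ F.comp (.reset G) := by
  intro h
  induction E generalizing F with
  | hole => cases F <;> cases h
  | appR v hv E ih =>
    cases F with
    | appR w hw F => exact ih F (FCtx.appR.inj h).2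
    | _ => cases h
  | appL E u ih =>
    cases F with
    | appL F w => exact ih F (FCtx.appL.inj h).1
    | _ => cases h

end ECtx

theorem FCtx.eq_toFCtx_or_eq_comp_reset (F : FCtx) :
    (∃ E : ECtx, F = E.toFCtx) ∨ ∃ (G : FCtx) (E : ECtx), F = G.comp (.reset E.toFCtx) := by
  induction F with
  | hole => exact .inl ⟨.hole, rfl⟩
  | appR v hv F ih =>
    obtain ⟨E, rfl⟩ | ⟨G, E, rfl⟩ := ih
    · exact .inl ⟨.appR v hv E, rfl⟩
    · exact .inr ⟨.appR v hv G, E, rfl⟩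
  | appL F u ih =>
    obtain ⟨E, rfl⟩ | ⟨G, E, rfl⟩ := ih
    · exact .inl ⟨.appL E u, rfl⟩
    · exact .inr ⟨.appL G u, E, rfl⟩
  | reset F ih =>
    obtain ⟨E, rfl⟩ | ⟨G, E, rfl⟩ := ih
    · exact .inr ⟨.hole, E, rfl⟩
    · exact .inr ⟨.reset G, E, rfl⟩

theorem FCtx.plug_comp_reset_toFCtx (F : FCtx) (E : ECtx) (t : Tm) :
    (F.comp (.reset E.toFCtx)).plug t = F.plug (.reset (E.plug t)) := by
  rw [plug_comp, plug, E.plug_toFCtx]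

theorem PotentialRedex.cases_of_red_plug {F : FCtx} {r t' : Tm} (hr : PotentialRedex r)
    (h : Red (F.plug r) t') :
    (∃ (x : ℕ) (t v : Tm), r = .app (.lam x t) v) ∨ (∃ v : Tm, r = .reset v) ∨
      ((∃ (k : ℕ) (t : Tm), r = .shift k t) ∧
        ∃ (G : FCtx) (E : ECtx), F = G.comp (.reset E.toFCtx)) := by
  generalize hs : F.plug r = s at h
  cases h with
  | beta G x t v hv =>
    exact .inl ⟨x, t, v, (FCtx.plug_potentialRedex_inj hr (.app (.lam x t) hv) hs).2⟩
  | resetVal G v hv =>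
    exact .inr (.inl ⟨v, (FCtx.plug_potentialRedex_inj hr (.reset hv) hs).2⟩)
  | capture G E k t =>
    rw [← FCtx.plug_comp_reset_toFCtx] at hs
    obtain ⟨hF, hshift⟩ := FCtx.plug_potentialRedex_inj hr (.shift k t) hs
    exact .inr (.inr ⟨⟨k, t, hshift⟩, G, E, hF⟩)

theorem stuck_plug_shift_iff {F : FCtx} {k : ℕ} {t : Tm} :
    Stuck (F.plug (.shift k t)) ↔ ∃ E : ECtx, F = E.toFCtx := by
  constructor
  · rintro ⟨-, hred⟩
    refine F.eq_toFCtx_or_eq_comp_reset.resolve_right ?_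
    rintro ⟨G, E, rfl⟩
    rw [FCtx.plug_comp_reset_toFCtx] at hred
    exact hred _ (.capture G E k t)
  · rintro ⟨E, rfl⟩
    have hr := PotentialRedex.shift k t
    refine ⟨FCtx.not_isValue_plug _ hr.not_isValue, fun t' hred => ?_⟩
    obtain ⟨_, _, _, ⟨⟩⟩ | ⟨_, ⟨⟩⟩ | ⟨-, G, E', hE⟩ := hr.cases_of_red_plug hred
    exact E.toFCtx_ne_comp_reset _ _ hE

theorem stuck_plug_app_iff {F : FCtx} {v w : Tm} (hv : IsValue v) (hw : IsValue w) :
    Stuck (F.plug (.app v w)) ↔ ∃ x, v = .var x := by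
  constructor
  · rintro ⟨-, hred⟩
    cases hv with
    | var x => exact ⟨x, rfl⟩
    | lam x t => exact absurd (.beta F x t w hw) (hred _)
  · rintro ⟨x, rfl⟩
    have hr := PotentialRedex.app hv hw
    refine ⟨F.not_isValue_plug hr.not_isValue, fun t' hred => ?_⟩
    obtain ⟨_, _, _, ⟨⟩⟩ | ⟨_, ⟨⟩⟩ | ⟨⟨_, _, ⟨⟩⟩, -⟩ := hr.cases_of_red_plug hred

/-- A term `t` is stuck iff it is a control-stuck term
`E[S k.t']` or an open-stuck term `F[x v]`. -/
theorem stuck_characterization (t : Tm) :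
    Stuck t ↔
      (∃ (E : ECtx) (k : ℕ) (t' : Tm), t = E.plug (Tm.shift k t')) ∨
      (∃ (F : FCtx) (x : ℕ) (v : Tm), IsValue v ∧ t = F.plug (Tm.app (Tm.var x) v)) := by
  constructor
  · intro h
    obtain ⟨F, r, hr, rfl⟩ := exists_eq_plug_potentialRedex h.1
    cases hr with
    | app hv hw =>
      obtain ⟨x, rfl⟩ := (stuck_plug_app_iff hv hw).1 h
      exact .inr ⟨F, x, _, hw, rfl⟩
    | shift k t =>
      obtain ⟨E, rfl⟩ := stuck_plug_shift_iff.1 h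
      exact .inl ⟨E, k, t, E.plug_toFCtx _⟩
    | reset hv => exact absurd (.resetVal F _ hv) (h.2 _)
  · rintro (⟨E, k, t, rfl⟩ | ⟨F, x, v, hv, rfl⟩)
    · rw [← E.plug_toFCtx]
      exact stuck_plug_shift_iff.2 ⟨E, rfl⟩
    · exact (stuck_plug_app_iff (.var x) hv).2 ⟨x, rfl⟩

end LambdaS
end

section
/- In the calculus λ_S, the terms S k.Ω and Ω are related by the contextual equivalence ≈₁ that observes only evaluation to values: for every closed context C, C[S k.Ω] evaluates to a value if and only if C[Ω] evaluates to a value. -/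
namespace LambdaS

/-! A term with `Ω` or `S k.Ω` in evaluation position never reaches a value: `Ω` reduces to itself,
and capturing a context by `S k.Ω` discards that context and leaves `⟨Ω⟩`. So a reduction sequence
that ends in a value never runs an occurrence of either term, and it can be replayed step by step
after exchanging some of these occurrences for one another.

Capture-avoiding substitution may rename the bound variables even of a closed term, so the exchange
has to allow all α-variants of the two terms. -/

theorem fresh_notMem (s : Finset ℕ) : fresh s ∉ s := by
  unfold fresh
  split_ifs with hs
  · exact fun hmem => absurd (s.le_max' _ hmem) (by omega)
  · exact fun hmem => hs ⟨_, hmem⟩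

theorem Tm.rename_eq_self {t : Tm} {y : ℕ} (hy : y ∉ t.fv) (z : ℕ) : t.rename y z = t := by
  induction t <;> grind [Tm.rename, Tm.fv]

theorem ECtx.fv_plug (E : ECtx) (t : Tm) : (E.plug t).fv = E.fv ∪ t.fv := by
  induction E with
  | hole => simp [ECtx.plug, ECtx.fv]
  | appR v _ E ih => simp [ECtx.plug, ECtx.fv, Tm.fv, ih]
  | appL E u ih => simp [ECtx.plug, ECtx.fv, Tm.fv, ih, Finset.union_assoc, Finset.union_comm t.fv]

theorem ECtx.not_isValue_plug_shift (E : ECtx) (k : ℕ) (t : Tm) :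
    ¬ IsValue (E.plug (.shift k t)) := by
  cases E <;> rintro ⟨⟩

namespace Red

theorem appL {t s : Tm} (h : Red t s) (u : Tm) : Red (.app t u) (.app s u) := by
  cases h with
  | beta F x b v hv => exact .beta (.appL F u) x b v hv
  | capture F E k b => exact .capture (.appL F u) E k b
  | resetVal F v hv => exact .resetVal (.appL F u) v hv

theorem appR {t s u : Tm} (hu : IsValue u) (h : Red t s) : Red (.app u t) (.app u s) := by
  cases h with
  | beta F x b v hv => exact .beta (.appR u hu F) x b v hv
  | capture F E k b => exact .capture (.appR u hu F) E k b
  | resetVal F v hv => exact .resetVal (.appR u hu F) v hv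

theorem reset {t s : Tm} (h : Red t s) : Red (.reset t) (.reset s) := by
  cases h with
  | beta F x b v hv => exact .beta (.reset F) x b v hv
  | capture F E k b => exact .capture (.reset F) E k b
  | resetVal F v hv => exact .resetVal (.reset F) v hv

@[elab_as_elim]
theorem structural_induction {motive : ∀ t s, Red t s → Prop}
    (beta : ∀ x b v (hv : IsValue v),
      motive (.app (.lam x b) v) (b.subst x v) (.beta .hole x b v hv))
    (capture : ∀ (E : ECtx) k b,
      motive (.reset (E.plug (.shift k b))) (.reset (b.subst k (contFun E)))
        (.capture .hole E k b))
    (resetVal : ∀ v (hv : IsValue v), motive (.reset v) v (.resetVal .hole v hv))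
    (appL : ∀ {t s} u (h : Red t s), motive t s h → motive (.app t u) (.app s u) (h.appL u))
    (appR : ∀ {t s u} (hu : IsValue u) (h : Red t s),
      motive t s h → motive (.app u t) (.app u s) (h.appR hu))
    (reset : ∀ {t s} (h : Red t s), motive t s h → motive (.reset t) (.reset s) h.reset)
    {t s : Tm} (h : Red t s) : motive t s h := by
  have plug (F : FCtx) {a b : Tm} (hred : ∀ F : FCtx, Red (F.plug a) (F.plug b))
      (hab : motive a b (hred .hole)) : motive (F.plug a) (F.plug b) (hred F) := by
    induction F with
    | hole => exact hab
    | appR v hv F ih => exact appR hv (hred F) ih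
    | appL F u ih => exact appL u (hred F) ih
    | reset F ih => exact reset (hred F) ih
  cases h with
  | beta F x b v hv => exact plug F (Red.beta · x b v hv) (beta x b v hv)
  | capture F E k b => exact plug F (Red.capture · E k b) (capture E k b)
  | resetVal F v hv => exact plug F (Red.resetVal · v hv) (resetVal v hv)

theorem not_isValue {t s : Tm} (h : Red t s) : ¬ IsValue t := by
  induction h using Red.structural_induction <;> rintro ⟨⟩

end Red

/-- `Exposes P t` means that `t` has the form `F[s]` with `F` an evaluation context and `P s`. -/
inductive Exposes (P : Tm → Prop) : Tm → Prop
  | base {t : Tm} : P t → Exposes P t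
  | appL {t : Tm} (u : Tm) : Exposes P t → Exposes P (.app t u)
  | appR {v t : Tm} : IsValue v → Exposes P t → Exposes P (.app v t)
  | reset {t : Tm} : Exposes P t → Exposes P (.reset t)

/-- A class of closed terms, stable under substitution, that prevent every term having one of them
in evaluation position from reaching a value. -/
structure IsBlocking (P : Tm → Prop) : Prop where
  closed {t : Tm} : P t → Closed t
  subst {t : Tm} (x : ℕ) (v : Tm) : P t → P (t.subst x v)
  not_evalsToValue {t : Tm} : Exposes P t → ¬ EvalsToValue t

theorem IsBlocking.not_isValue {P : Tm → Prop} (hP : IsBlocking P) {t : Tm} (ht : P t) :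
    ¬ IsValue t :=
  fun hv => hP.not_evalsToValue (.base ht) ⟨t, .refl, hv⟩

/-- `Interchange P s t` means that `t` arises from `s` by exchanging some subterms satisfying `P`
for other terms satisfying `P`. -/
inductive Interchange (P : Tm → Prop) : Tm → Tm → Prop
  | base {s t : Tm} : P s → P t → Interchange P s t
  | var (x : ℕ) : Interchange P (.var x) (.var x)
  | lam (x : ℕ) {s t : Tm} : Interchange P s t → Interchange P (.lam x s) (.lam x t)
  | app {s t s' t' : Tm} :
      Interchange P s t → Interchange P s' t' → Interchange P (.app s s') (.app t t')
  | shift (k : ℕ) {s t : Tm} : Interchange P s t → Interchange P (.shift k s) (.shift k t)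
  | reset {s t : Tm} : Interchange P s t → Interchange P (.reset s) (.reset t)

namespace Interchange

variable {P : Tm → Prop}

theorem refl (t : Tm) : Interchange P t t := by
  induction t with
  | var x => exact .var x
  | lam x _ ih => exact .lam x ih
  | app _ _ iht ihu => exact .app iht ihu
  | shift k _ ih => exact .shift k ih
  | reset _ ih => exact .reset ih

theorem plug (C : Ctx) {s t : Tm} (h : Interchange P s t) :
    Interchange P (C.plug s) (C.plug t) := by
  induction C with
  | hole => exact h
  | lam x _ ih => exact .lam x ih
  | appL _ u ih => exact .app ih (.refl u)
  | appR u _ ih => exact .app (.refl u) ih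
  | shift k _ ih => exact .shift k ih
  | reset _ ih => exact .reset ih

theorem fv_eq (hP : IsBlocking P) {s t : Tm} (h : Interchange P s t) : s.fv = t.fv := by
  induction h with
  | base hs ht => exact (hP.closed hs).trans (hP.closed ht).symm
  | var x => rfl
  | lam _ _ ih | shift _ _ ih | reset _ ih => simp only [Tm.fv, ih]
  | app _ _ ih ih' => simp only [Tm.fv, ih, ih']

theorem rename (hP : IsBlocking P) {s t : Tm} (h : Interchange P s t) (y z : ℕ) :
    Interchange P (s.rename y z) (t.rename y z) := by
  have rename_eq {r : Tm} (hr : P r) : r.rename y z = r :=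
    Tm.rename_eq_self (by simp [show r.fv = ∅ from hP.closed hr]) z
  induction h with
  | base hs ht =>
    rw [rename_eq hs, rename_eq ht]
    exact .base hs ht
  | var x => exact .refl _
  | lam x h ih =>
    simp only [Tm.rename]
    split_ifs
    exacts [.lam x h, .lam x ih]
  | app _ _ ih ih' => exact .app ih ih'
  | shift k h ih =>
    simp only [Tm.rename]
    split_ifs
    exacts [.shift k h, .shift k ih]
  | reset _ ih => exact .reset ih

theorem subst (hP : IsBlocking P) {s t v w : Tm} (h : Interchange P s t) (x : ℕ)
    (hvw : Interchange P v w) : Interchange P (s.subst x v) (t.subst x w) := by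
  match s, t, h with
  | _, _, .base hs ht => exact .base (hP.subst x v hs) (hP.subst x w ht)
  | _, _, .var y =>
    simp only [Tm.subst]
    split_ifs
    exacts [hvw, .var y]
  | _, _, .lam y h =>
    rw [Tm.subst, Tm.subst, ← hvw.fv_eq hP, ← h.fv_eq hP]
    split_ifs
    exacts [.lam y h, .lam _ ((h.rename hP y _).subst hP x hvw), .lam y (h.subst hP x hvw)]
  | _, _, .app h h' =>
    rw [Tm.subst, Tm.subst]
    exact .app (h.subst hP x hvw) (h'.subst hP x hvw)
  | _, _, .shift k h =>
    rw [Tm.subst, Tm.subst, ← hvw.fv_eq hP, ← h.fv_eq hP]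
    split_ifs
    exacts [.shift k h, .shift _ ((h.rename hP k _).subst hP x hvw), .shift k (h.subst hP x hvw)]
  | _, _, .reset h =>
    rw [Tm.subst, Tm.subst]
    exact .reset (h.subst hP x hvw)
termination_by s.size
decreasing_by all_goals simp only [Tm.size_rename, Tm.size]; omega

theorem contFun (hP : IsBlocking P) {E E' : ECtx}
    (h : ∀ t, Interchange P (E.plug t) (E'.plug t)) :
    Interchange P (contFun E) (contFun E') := by
  have hfv : E.fv = E'.fv := by
    simpa [ECtx.fv_plug, omegaTm, Tm.fv] using (h omegaTm).fv_eq hP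
  unfold LambdaS.contFun
  rw [hfv]
  exact .lam _ (.reset (h _))

theorem isValue (hP : IsBlocking P) {s t : Tm} (h : Interchange P s t) (hs : IsValue s) :
    IsValue t := by
  cases hs with
  | var x => cases h with
    | base hs _ => exact absurd (.var x) (hP.not_isValue hs)
    | var => exact .var x
  | lam x b => cases h with
    | base hs _ => exact absurd (.lam x b) (hP.not_isValue hs)
    | lam => exact .lam x _

theorem exists_eq_plug_shift (hP : IsBlocking P) {E : ECtx} {k : ℕ} {b t : Tm}
    (hE : ¬ Exposes P (E.plug (.shift k b))) (h : Interchange P (E.plug (.shift k b)) t) :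
    ∃ (E' : ECtx) (b' : Tm), t = E'.plug (.shift k b') ∧ Interchange P b b' ∧
      ∀ r, Interchange P (E.plug r) (E'.plug r) := by
  induction E generalizing t with
  | hole => cases h with
    | base hs _ => exact absurd (.base hs) hE
    | shift _ hb => exact ⟨.hole, _, rfl, hb, .refl⟩
  | appR v hv E ih => cases h with
    | base hs _ => exact absurd (.base hs) hE
    | app hvw h =>
      obtain ⟨E', b', rfl, hb, hEE'⟩ := ih (fun he => hE (.appR hv he)) h
      exact ⟨.appR _ (hvw.isValue hP hv) E', b', rfl, hb, fun r => .app hvw (hEE' r)⟩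
  | appL E u ih => cases h with
    | base hs _ => exact absurd (.base hs) hE
    | app h hu =>
      obtain ⟨E', b', rfl, hb, hEE'⟩ := ih (fun he => hE (.appL u he)) h
      exact ⟨.appL E' _, b', rfl, hb, fun r => .app (hEE' r) hu⟩

theorem exists_red (hP : IsBlocking P) {s s' t : Tm} (hred : Red s s') (hs : ¬ Exposes P s)
    (h : Interchange P s t) : ∃ t', Red t t' ∧ Interchange P s' t' := by
  induction hred using Red.structural_induction generalizing t with
  | beta x b v hv => cases h with
    | base hPs _ => exact absurd (.base hPs) hs
    | app hf hvw => cases hf with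
      | base hPf _ => exact absurd (.appL v (.base hPf)) hs
      | lam _ hb => exact ⟨_, .beta .hole x _ _ (hvw.isValue hP hv), hb.subst hP x hvw⟩
  | capture E k b => cases h with
    | base hPs _ => exact absurd (.base hPs) hs
    | reset h =>
      obtain ⟨E', b', rfl, hb, hE⟩ := h.exists_eq_plug_shift hP (fun he => hs (.reset he))
      exact ⟨_, .capture .hole E' k b', .reset (hb.subst hP k (.contFun hP hE))⟩
  | resetVal v hv => cases h with
    | base hPs _ => exact absurd (.base hPs) hs
    | reset h => exact ⟨_, .resetVal .hole _ (h.isValue hP hv), h⟩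
  | appL u _ ih => cases h with
    | base hPs _ => exact absurd (.base hPs) hs
    | app h hu =>
      obtain ⟨t', hred', h'⟩ := ih (fun he => hs (.appL u he)) h
      exact ⟨_, hred'.appL _, .app h' hu⟩
  | appR hv _ ih => cases h with
    | base hPs _ => exact absurd (.base hPs) hs
    | app hvw h =>
      obtain ⟨t', hred', h'⟩ := ih (fun he => hs (.appR hv he)) h
      exact ⟨_, hred'.appR (hvw.isValue hP hv), .app hvw h'⟩
  | reset _ ih => cases h with
    | base hPs _ => exact absurd (.base hPs) hs
    | reset h =>
      obtain ⟨t', hred', h'⟩ := ih (fun he => hs (.reset he)) h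
      exact ⟨_, hred'.reset, .reset h'⟩

theorem evalsToValue (hP : IsBlocking P) {s t : Tm} (h : Interchange P s t)
    (hs : EvalsToValue s) : EvalsToValue t := by
  obtain ⟨v, hsv, hv⟩ := hs
  induction hsv using Relation.ReflTransGen.head_induction_on generalizing t with
  | refl => exact ⟨t, .refl, h.isValue hP hv⟩
  | head hred hrest ih =>
    have hexp : ¬ Exposes P _ := fun he => hP.not_evalsToValue he ⟨v, .head hred hrest, hv⟩
    obtain ⟨t', hred', h'⟩ := h.exists_red hP hred hexp
    obtain ⟨w, hw, hwv⟩ := ih h'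
    exact ⟨w, .head hred' hw, hwv⟩

end Interchange

theorem IsBlocking.evalsToValue_plug_iff {P : Tm → Prop} (hP : IsBlocking P) {s t : Tm}
    (hs : P s) (ht : P t) (C : Ctx) : EvalsToValue (C.plug s) ↔ EvalsToValue (C.plug t) :=
  ⟨((Interchange.base hs ht).plug C).evalsToValue hP,
    ((Interchange.base ht hs).plug C).evalsToValue hP⟩

/-- The α-variants `λx.x x` of `ω`. -/
inductive IsOmegaFun : Tm → Prop
  | mk (x : ℕ) : IsOmegaFun (.lam x (.app (.var x) (.var x)))

/-- The α-variants of `Ω`, under any number of shift operators. -/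
inductive IsShiftedOmega : Tm → Prop
  | app {u w : Tm} : IsOmegaFun u → IsOmegaFun w → IsShiftedOmega (.app u w)
  | shift (k : ℕ) {t : Tm} : IsShiftedOmega t → IsShiftedOmega (.shift k t)

namespace IsOmegaFun

theorem closed {t : Tm} (h : IsOmegaFun t) : Closed t := by
  cases h
  simp [Closed, Tm.fv]

theorem isValue {t : Tm} (h : IsOmegaFun t) : IsValue t := by
  cases h
  exact .lam _ _

theorem subst {t : Tm} (h : IsOmegaFun t) (x : ℕ) (v : Tm) : IsOmegaFun (t.subst x v) := by
  obtain ⟨y⟩ := h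
  rw [Tm.subst]
  split_ifs with hyx
  · exact .mk y
  · have hfresh := fresh_notMem (v.fv ∪ (Tm.app (.var y) (.var y)).fv ∪ {x})
    generalize fresh (v.fv ∪ (Tm.app (.var y) (.var y)).fv ∪ {x}) = z at hfresh ⊢
    have hzx : z ≠ x := by
      rintro rfl
      simp at hfresh
    simpa [Tm.rename, Tm.subst, hzx] using mk z
  · simpa [Tm.subst, hyx] using mk y

end IsOmegaFun

namespace IsShiftedOmega

theorem closed {t : Tm} (h : IsShiftedOmega t) : Closed t := by
  induction h with
  | app hu hw => simp [Closed, Tm.fv, show _ = ∅ from hu.closed, show _ = ∅ from hw.closed]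
  | shift k _ ih => simp [Closed, Tm.fv, show _ = ∅ from ih]

theorem subst {t : Tm} (h : IsShiftedOmega t) (x : ℕ) (v : Tm) :
    IsShiftedOmega (t.subst x v) := by
  induction h with
  | app hu hw =>
    rw [Tm.subst]
    exact .app (hu.subst x v) (hw.subst x v)
  | @shift k t ht ih =>
    have rename_eq (z : ℕ) : t.rename k z = t :=
      Tm.rename_eq_self (by simp [show t.fv = ∅ from ht.closed]) z
    rw [Tm.subst, rename_eq]
    split_ifs
    exacts [.shift k ht, .shift _ ih, .shift k ih]

theorem not_isValue {t : Tm} (h : IsShiftedOmega t) : ¬ IsValue t := by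
  cases h <;> rintro ⟨⟩

end IsShiftedOmega

namespace Exposes

theorem not_isValue {P : Tm → Prop} (hP : ∀ t, P t → ¬ IsValue t) {t : Tm} (h : Exposes P t) :
    ¬ IsValue t := by
  cases h with
  | base ht => exact hP t ht
  | appL | appR | reset => rintro ⟨⟩

theorem isShiftedOmega_of_plug_shift {E : ECtx} {k : ℕ} {b : Tm}
    (h : Exposes IsShiftedOmega (E.plug (.shift k b))) : IsShiftedOmega b := by
  induction E with
  | hole =>
    obtain ⟨h⟩ := h
    cases h with
    | shift _ hb => exact hb
  | appR v hv E ih => cases h with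
    | base h =>
      obtain ⟨_, hw⟩ := h
      exact absurd hw.isValue (E.not_isValue_plug_shift k b)
    | appL _ h => exact absurd hv (h.not_isValue fun _ => IsShiftedOmega.not_isValue)
    | appR _ h => exact ih h
  | appL E u ih => cases h with
    | base h =>
      obtain ⟨hu, _⟩ := h
      exact absurd hu.isValue (E.not_isValue_plug_shift k b)
    | appL _ h => exact ih h
    | appR hv _ => exact absurd hv (E.not_isValue_plug_shift k b)

theorem red {t s : Tm} (h : Exposes IsShiftedOmega t) (hred : Red t s) :
    Exposes IsShiftedOmega s := by
  have not_value {r : Tm} (hr : Exposes IsShiftedOmega r) : ¬ IsValue r :=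
    hr.not_isValue fun _ => IsShiftedOmega.not_isValue
  induction hred using Red.structural_induction with
  | beta x b v hv => cases h with
    | base h =>
      obtain ⟨⟨_⟩, hw⟩ := h
      simpa [Tm.subst] using Exposes.base (.app hw hw)
    | appL _ h => exact absurd (.lam x b) (not_value h)
    | appR _ h => exact absurd hv (not_value h)
  | capture E k b => cases h with
    | base h => cases h
    | reset h => exact .reset (.base (h.isShiftedOmega_of_plug_shift.subst k _))
  | resetVal v _ => cases h with
    | base h => cases h
    | reset h => exact h
  | appL u hr ih => cases h with
    | base h =>
      obtain ⟨hu, _⟩ := h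
      exact absurd hu.isValue hr.not_isValue
    | appL _ h => exact .appL u (ih h)
    | appR hv _ => exact absurd hv hr.not_isValue
  | appR hv hr ih => cases h with
    | base h =>
      obtain ⟨_, hw⟩ := h
      exact absurd hw.isValue hr.not_isValue
    | appL _ h => exact absurd hv (not_value h)
    | appR _ h => exact .appR hv (ih h)
  | reset _ ih => cases h with
    | base h => cases h
    | reset h => exact .reset (ih h)

theorem reflTransGen {t s : Tm} (h : Exposes IsShiftedOmega t)
    (hred : Relation.ReflTransGen Red t s) : Exposes IsShiftedOmega s := by
  induction hred with
  | refl => exact h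
  | tail _ hred ih => exact ih.red hred

end Exposes

theorem isBlocking_isShiftedOmega : IsBlocking IsShiftedOmega where
  closed := IsShiftedOmega.closed
  subst x v h := h.subst x v
  not_evalsToValue := by
    rintro t ht ⟨v, htv, hv⟩
    exact (ht.reflTransGen htv).not_isValue (fun _ => IsShiftedOmega.not_isValue) hv

theorem isShiftedOmega_OmegaTm : IsShiftedOmega OmegaTm :=
  .app (.mk 0) (.mk 0)

theorem shift_Omega_ctxEquiv_one_general (k : ℕ) (C : Ctx) :
    EvalsToValue (C.plug (Tm.shift k OmegaTm)) ↔ EvalsToValue (C.plug OmegaTm) :=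
  isBlocking_isShiftedOmega.evalsToValue_plug_iff (.shift k isShiftedOmega_OmegaTm)
    isShiftedOmega_OmegaTm C

/-- `S k.Ω` and `Ω` are related by the contextual equivalence ≈₁
that observes only evaluation to values. -/
theorem shift_Omega_ctxEquiv_one :
    ∀ C : Ctx, C.fv = ∅ →
      (EvalsToValue (C.plug (Tm.shift 0 OmegaTm)) ↔ EvalsToValue (C.plug OmegaTm)) :=
  fun C _ => shift_Omega_ctxEquiv_one_general 0 C

end LambdaS
end
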